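/- Let μ > 0, r > 0, θ > 0, k a positive integer, c = (μ/(r+μ))^k, α = (r+μ)/μ, ρ = rμ/(r+μ), and F^{*n}(t) = ∫_0^t μ^{nk} x^{nk−1} e^{-μx}/(nk−1)! dx the Gamma(nk, μ) CDF. Define w(t) = θ Σ_{n=1}^∞ c^n F^{*n}(t) and v = θ/(α^k − 1). Then lim_{t→∞} e^{ρ t} (v − w(t)) = θ μ/(k r). -/

import Mathlib

/-!
The Gamma(`nk`, `μ`) distribution function at `t` is the probability that a Poisson(`μt`) variable
is at least `nk` (`integral_gamma`). Writing `b_m` for the probability that this variable lies in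
`[mk, (m+1)k)`, summation by parts (`hasSum_partial_sums`) gives
`v - w(t) = θ c/(1-c) ∑_m c^m b_m`, where `c = α^{-k}` and `c/(1-c) = 1/(α^k - 1)`.

Multiplying by `e^{ρt}` tilts the Poisson law to the rate `γ = μ/α = μ - ρ`, so that
`e^{ρt} ∑_m c^m b_m = ∑_{i<k} α^i P(Poisson(γt) ≡ i mod k)`. A Poisson variable with large
parameter is equidistributed modulo `k` (`tendsto_residue`, by the roots-of-unity filter), so each
probability tends to `1/k`; the geometric sum `∑_{i<k} α^i = (α^k - 1)/(α - 1)` then leaves the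
limit `θ/(k(α - 1)) = θμ/(kr)`.
-/

open Filter Topology

/-- The exponential damping behind the equidistribution: `e^{-y} e^{zy} → 0` for every point
`z ≠ 1` of the unit circle, because `Re z < 1` there. -/
lemma tendsto_exp_circle {z : ℂ} (hz : ‖z‖ = 1) (hz1 : z ≠ 1) :
    Tendsto (fun y : ℝ => Complex.exp (z * y - y)) atTop (𝓝 0) := by
  have hre : z.re < 1 := by
    refine lt_of_le_of_ne (hz ▸ Complex.re_le_norm z) fun h => hz1 ?_
    have h2 : z.re * z.re + z.im * z.im = 1 := by
      rw [← Complex.normSq_apply, Complex.normSq_eq_norm_sq, hz, one_pow]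
    have h3 : z.im = 0 := by
      rw [h] at h2
      exact mul_self_eq_zero.mp (by linarith)
    exact Complex.ext (by simpa using h) (by simpa using h3)
  rw [tendsto_zero_iff_norm_tendsto_zero]
  have : (fun y : ℝ => ‖Complex.exp (z * y - y)‖)
      = fun y : ℝ => Real.exp ((z.re - 1) * y) := by
    funext y
    rw [Complex.norm_exp]
    congr 1
    simp
    ring
  rw [this]
  exact Real.tendsto_exp_atBot.comp
    (tendsto_id.const_mul_atTop_of_neg (by linarith : z.re - 1 < 0))

/-- Roots-of-unity filter for the exponential series: the terms with index `≡ i (mod k)`. -/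
lemma hasSum_residue {k i : ℕ} (hi : i < k) {ζ : ℂ} (hζ : IsPrimitiveRoot ζ k) (y : ℝ) :
    HasSum (fun m : ℕ => (k : ℂ) * ((y : ℂ) ^ (m * k + i) / (Nat.factorial (m * k + i) : ℂ)))
      (∑ l ∈ Finset.range k, (ζ ^ l) ^ (k - i) * Complex.exp (ζ ^ l * y)) := by
  have hk : 0 < k := by omega
  have hexp (z : ℂ) : HasSum (fun n : ℕ => z ^ n / (Nat.factorial n : ℂ)) (Complex.exp z) := by
    rw [Complex.exp_eq_exp_ℂ]
    exact NormedSpace.expSeries_div_hasSum_exp z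
  have h1 : HasSum (fun j : ℕ => ∑ l ∈ Finset.range k,
        (ζ ^ l) ^ (k - i) * ((ζ ^ l * y) ^ j / (Nat.factorial j : ℂ)))
      (∑ l ∈ Finset.range k, (ζ ^ l) ^ (k - i) * Complex.exp (ζ ^ l * y)) :=
    hasSum_sum fun l _ => (hexp _).mul_left _
  have h2 (j : ℕ) : ∑ l ∈ Finset.range k,
        (ζ ^ l) ^ (k - i) * ((ζ ^ l * y) ^ j / (Nat.factorial j : ℂ))
      = (∑ l ∈ Finset.range k, (ζ ^ (k - i + j)) ^ l) *
        ((y : ℂ) ^ j / (Nat.factorial j : ℂ)) := by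
    rw [Finset.sum_mul]
    refine Finset.sum_congr rfl fun l _ => ?_
    rw [← pow_mul ζ (k - i + j) l, mul_comm (k - i + j) l, pow_mul, pow_add, mul_pow]
    ring
  simp_rw [h2] at h1
  have hinj : Function.Injective (fun m : ℕ => m * k + i) := fun a b h => by
    have h : a * k + i = b * k + i := h
    exact Nat.eq_of_mul_eq_mul_right hk (by omega)
  rw [← hinj.hasSum_iff] at h1
  · convert h1 using 2 with m
    have : ζ ^ (k - i + (m * k + i)) = 1 := by
      rw [hζ.pow_eq_one_iff_dvd]
      exact ⟨m + 1, by rw [mul_add, mul_comm k m]; omega⟩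
    simp [this]
  · intro j hj
    have hne : ζ ^ (k - i + j) ≠ 1 := by
      rw [Ne, hζ.pow_eq_one_iff_dvd]
      rintro ⟨q, hq⟩
      apply hj
      rcases q with _ | q
      · omega
      · exact ⟨q, by rw [mul_add, mul_comm k q] at hq; simp only; omega⟩
    have hgeom := geom_sum_eq hne k
    rw [← pow_mul, mul_comm _ k, pow_mul, hζ.pow_eq_one, one_pow, sub_self, zero_div] at hgeom
    rw [hgeom, zero_mul]

/-- A Poisson variable of parameter `y` is asymptotically equidistributed modulo `k`. -/
lemma tendsto_residue {k i : ℕ} (hi : i < k) :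
    Tendsto (fun y : ℝ => ∑' m : ℕ,
        Real.exp (-y) * (y ^ (m * k + i) / (Nat.factorial (m * k + i) : ℝ)))
      atTop (𝓝 (1 / k)) := by
  have hk : 0 < k := by omega
  have hkC : (k : ℂ) ≠ 0 := by exact_mod_cast hk.ne'
  have hζ := Complex.isPrimitiveRoot_exp k hk.ne'
  set ζ := Complex.exp (2 * Real.pi * Complex.I / k)
  have key (y : ℝ) : (((∑' m : ℕ,
        Real.exp (-y) * (y ^ (m * k + i) / (Nat.factorial (m * k + i) : ℝ))) : ℝ) : ℂ)
      = (1 / k) * ∑ l ∈ Finset.range k, (ζ ^ l) ^ (k - i) * Complex.exp (ζ ^ l * y - y) := by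
    have h := ((hasSum_residue hi hζ y).mul_left (Complex.exp (-y) / k)).tsum_eq
    rw [Complex.ofReal_tsum]
    convert h using 1
    · refine tsum_congr fun m => ?_
      push_cast
      field_simp
    · rw [Finset.mul_sum, Finset.mul_sum]
      refine Finset.sum_congr rfl fun l _ => ?_
      rw [sub_eq_add_neg, Complex.exp_add]
      ring
  have hlim : Tendsto (fun y : ℝ => (1 / k : ℂ) *
        ∑ l ∈ Finset.range k, (ζ ^ l) ^ (k - i) * Complex.exp (ζ ^ l * y - y))
      atTop (𝓝 ((1 / k : ℂ) * ∑ l ∈ Finset.range k, if l = 0 then 1 else 0)) := by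
    refine (tendsto_finsetSum _ fun l hl => ?_).const_mul _
    split_ifs with h0
    · subst h0
      simp
    · have hn : ‖ζ ^ l‖ = 1 := by rw [norm_pow, hζ.norm'_eq_one hk.ne', one_pow]
      have hne : ζ ^ l ≠ 1 := hζ.pow_ne_one_of_pos_of_lt h0 (Finset.mem_range.mp hl)
      simpa using (tendsto_exp_circle hn hne).const_mul ((ζ ^ l) ^ (k - i))
  simp_rw [← key] at hlim
  have := (Complex.continuous_re.tendsto _).comp hlim
  have hval : ((1 / k : ℂ) * ∑ l ∈ Finset.range k, if l = 0 then (1 : ℂ) else 0)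
      = ((1 / k : ℝ) : ℂ) := by
    simp [hk]
  rw [hval] at this
  simpa [Function.comp_def] using this

/-- The Gamma distribution function as a Poisson tail. -/
lemma integral_gamma (μ t : ℝ) (N : ℕ) :
    ∫ x in (0:ℝ)..t, μ ^ (N + 1) * x ^ N * Real.exp (-(μ * x)) / (Nat.factorial N : ℝ)
      = 1 - ∑ j ∈ Finset.range (N + 1),
          Real.exp (-(μ * t)) * ((μ * t) ^ j / (Nat.factorial j : ℝ)) := by
  have hd (N : ℕ) (x : ℝ) : HasDerivAt (fun x => 1 - ∑ j ∈ Finset.range (N + 1),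
          Real.exp (-(μ * x)) * ((μ * x) ^ j / (Nat.factorial j : ℝ)))
        (μ ^ (N + 1) * x ^ N * Real.exp (-(μ * x)) / (Nat.factorial N : ℝ)) x := by
    have hlin : HasDerivAt (fun x : ℝ => μ * x) μ x := by
      simpa using (hasDerivAt_id x).const_mul μ
    have he := hlin.neg.exp
    induction N with
    | zero =>
      have h := he.const_sub 1
      simp only [zero_add, Finset.sum_range_one, pow_zero, Nat.factorial_zero, Nat.cast_one,
        div_one, mul_one]
      refine h.congr_deriv ?_
      simp only [Pi.neg_apply]
      ring
    | succ N ih =>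
      have h := ih.sub (he.mul ((hlin.pow (N + 1)).div_const (Nat.factorial (N + 1) : ℝ)))
      refine (h.congr_deriv ?_).congr_of_eventuallyEq (Eventually.of_forall fun z => ?_)
      · have hf : (Nat.factorial N : ℝ) ≠ 0 := by positivity
        have hN : (N + 1 : ℝ) ≠ 0 := by positivity
        simp only [Nat.factorial_succ, Pi.pow_apply, Pi.neg_apply]
        push_cast
        field_simp
        ring
      · simp only [Finset.sum_range_succ _ (N + 1), Pi.sub_apply, Pi.mul_apply, Pi.pow_apply,
          Pi.neg_apply]
        ring
  rw [intervalIntegral.integral_eq_sub_of_hasDerivAt (fun x _ => hd N x)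
    (Continuous.intervalIntegrable (by fun_prop) _ _)]
  have h0 : ∑ j ∈ Finset.range (N + 1),
      Real.exp (-(μ * 0)) * ((μ * 0) ^ j / (Nat.factorial j : ℝ)) = 1 := by
    rw [Finset.sum_range_succ']
    simp
  rw [h0]
  ring

/-- Summation by parts for a geometric weight: it is the Cauchy product of the geometric series
with `∑ c^m b_m`. -/
lemma hasSum_partial_sums {c : ℝ} (hc0 : 0 < c) (hc1 : c < 1) {b : ℕ → ℝ}
    (hb : Summable fun m => c ^ m * b m) :
    HasSum (fun n : ℕ => c ^ (n + 1) * (1 - ∑ m ∈ Finset.range (n + 1), b m))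
      (c / (1 - c) * (1 - ∑' m, c ^ m * b m)) := by
  have hg := summable_geometric_of_lt_one hc0.le hc1
  have h1 := (summable_norm_sum_mul_range_of_summable_norm hb.norm hg.norm).of_norm.hasSum
  rw [← tsum_mul_tsum_eq_tsum_sum_range_of_summable_norm hb.norm hg.norm,
    tsum_geometric_of_lt_one hc0.le hc1] at h1
  have h2 := ((hasSum_geometric_of_lt_one hc0.le hc1).sub h1).mul_left c
  have hterm (n : ℕ) : c * (c ^ n - ∑ m ∈ Finset.range (n + 1), c ^ m * b m * c ^ (n - m))
      = c ^ (n + 1) * (1 - ∑ m ∈ Finset.range (n + 1), b m) := by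
    have : ∑ m ∈ Finset.range (n + 1), c ^ m * b m * c ^ (n - m)
        = c ^ n * ∑ m ∈ Finset.range (n + 1), b m := by
      rw [Finset.mul_sum]
      refine Finset.sum_congr rfl fun m hm => ?_
      have hm : m ≤ n := by simpa [Nat.lt_succ_iff] using hm
      rw [mul_right_comm, ← pow_add, Nat.add_sub_cancel' hm]
    rw [this]
    ring
  have hval : c * ((1 - c)⁻¹ - (∑' m, c ^ m * b m) * (1 - c)⁻¹)
      = c / (1 - c) * (1 - ∑' m, c ^ m * b m) := by ring
  rw [hval] at h2
  simpa only [hterm] using h2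

/-- **Proposition 2.3 / Equation (2.8).** With `w(t) = θ ∑_{n≥1} c^n F^{*n}(t)`
and `v = θ/(α^k − 1)`, the tilted remainder converges:
`lim_{t→∞} e^{ρt}(v − w(t)) = θμ/(kr)`. -/
theorem asymptotic_expansion
    (μ r θ : ℝ) (hμ : 0 < μ) (hr : 0 < r) (hθ : 0 < θ)
    (k : ℕ) (hk : 1 ≤ k)
    (c α ρ : ℝ) (hc : c = (μ / (r + μ)) ^ k)
    (hα : α = (r + μ) / μ) (hρ : ρ = r * μ / (r + μ))
    (Fstar : ℕ → ℝ → ℝ)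
    (hFstar : ∀ (n : ℕ) (t : ℝ), Fstar n t
      = ∫ x in (0:ℝ)..t, μ ^ (n * k) * x ^ (n * k - 1) * Real.exp (-(μ * x))
          / (Nat.factorial (n * k - 1) : ℝ))
    (w : ℝ → ℝ)
    (hw : ∀ t : ℝ, w t = θ * ∑' n : ℕ, c ^ (n + 1) * Fstar (n + 1) t)
    (v : ℝ) (hv : v = θ / (α ^ k - 1)) :
    Filter.Tendsto (fun t : ℝ => Real.exp (ρ * t) * (v - w t))
      Filter.atTop (nhds (θ * μ / (k * r))) := by
  have hα0 : 0 < α := by rw [hα]; positivity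
  have hα1 : 1 < α := by rw [hα, lt_div_iff₀ hμ]; linarith
  have hαk : 1 < α ^ k := one_lt_pow₀ hα1 (by omega)
  have hcα : c = (α ^ k)⁻¹ := by rw [hc, hα, ← inv_pow, inv_div]
  have hc0 : 0 < c := by rw [hcα]; positivity
  have hc1 : c < 1 := by rw [hcα]; exact inv_lt_one_of_one_lt₀ hαk
  have hratio : c / (1 - c) = 1 / (α ^ k - 1) := by
    rw [hcα]
    have : α ^ k - 1 ≠ 0 := by linarith
    have : α ^ k ≠ 0 := by positivity
    field_simp
  -- `γ` is the rate of the tilted Poisson law: `γ = μ - ρ = μ / α`.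
  obtain ⟨γ, hγ⟩ : ∃ γ, γ = μ * α⁻¹ := ⟨_, rfl⟩
  have hγ0 : 0 < γ := by rw [hγ]; positivity
  have hγρ : ρ - μ = -γ := by rw [hρ, hγ, hα]; field_simp; ring
  let p (y : ℝ) (j : ℕ) : ℝ := Real.exp (-y) * (y ^ j / (Nat.factorial j : ℝ))
  have hp (y : ℝ) (i : ℕ) : Summable fun m : ℕ => p y (m * k + i) := by
    refine ((Real.summable_pow_div_factorial y).mul_left (Real.exp (-y))).comp_injective
      (i := fun m : ℕ => m * k + i) fun a b h => ?_
    have h : a * k + i = b * k + i := h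
    exact Nat.eq_of_mul_eq_mul_right hk (by omega)
  let b (t : ℝ) (m : ℕ) : ℝ := ∑ i ∈ Finset.range k, p (μ * t) (m * k + i)
  have hblock (t : ℝ) (n : ℕ) : ∑ j ∈ Finset.range (n * k), p (μ * t) j
      = ∑ m ∈ Finset.range n, b t m := by
    induction n with
    | zero => simp
    | succ n ih => rw [Nat.succ_mul, Finset.sum_range_add, ih, Finset.sum_range_succ]
  have hF (t : ℝ) (n : ℕ) : Fstar (n + 1) t = 1 - ∑ m ∈ Finset.range (n + 1), b t m := by
    obtain ⟨N, hN⟩ : ∃ N, (n + 1) * k = N + 1 :=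
      ⟨(n + 1) * k - 1, (Nat.succ_pred_eq_of_pos (by positivity)).symm⟩
    rw [hFstar, ← hblock, hN, Nat.add_sub_cancel, integral_gamma]
  -- Tilting: `c^m` turns rate `μ` into rate `γ`, up to the factor `α^i` of the residue `i`.
  have htilt (t : ℝ) (m : ℕ) : Real.exp (ρ * t) * (c ^ m * b t m)
      = ∑ i ∈ Finset.range k, α ^ i * p (γ * t) (m * k + i) := by
    simp only [b, Finset.mul_sum]
    refine Finset.sum_congr rfl fun i _ => ?_
    have he : Real.exp (-(γ * t)) = Real.exp (ρ * t) * Real.exp (-(μ * t)) := by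
      rw [← Real.exp_add]
      congr 1
      linear_combination (-t) * hγρ
    have hpow : α ^ i * (γ * t) ^ (m * k + i) = c ^ m * (μ * t) ^ (m * k + i) := by
      have : γ * t = α⁻¹ * (μ * t) := by rw [hγ]; ring
      rw [this, mul_pow, pow_add α⁻¹, hcα, inv_pow, inv_pow, inv_pow, mul_comm m k, pow_mul α k m]
      field_simp
    simp only [p]
    rw [he]
    linear_combination (-(Real.exp (ρ * t) * Real.exp (-(μ * t)) /
      (Nat.factorial (m * k + i) : ℝ))) * hpow
  have htsum (t : ℝ) : HasSum (fun m => Real.exp (ρ * t) * (c ^ m * b t m))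
      (∑ i ∈ Finset.range k, α ^ i * ∑' m, p (γ * t) (m * k + i)) := by
    simp_rw [htilt]
    exact hasSum_sum fun i _ => (hp _ i).hasSum.mul_left _
  have hsb (t : ℝ) : Summable fun m => c ^ m * b t m :=
    (summable_mul_left_iff (Real.exp_pos (ρ * t)).ne').mp (htsum t).summable
  have hmain (t : ℝ) : Real.exp (ρ * t) * (v - w t)
      = θ * (1 / (α ^ k - 1)) * ∑ i ∈ Finset.range k, α ^ i * ∑' m, p (γ * t) (m * k + i) := by
    rw [← (htsum t).tsum_eq, tsum_mul_left, hw, hv]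
    simp_rw [hF]
    rw [(hasSum_partial_sums hc0 hc1 (hsb t)).tsum_eq, hratio]
    ring
  simp_rw [hmain]
  have hlim : Tendsto (fun t : ℝ => θ * (1 / (α ^ k - 1)) *
        ∑ i ∈ Finset.range k, α ^ i * ∑' m, p (γ * t) (m * k + i))
      atTop (𝓝 (θ * (1 / (α ^ k - 1)) * ∑ i ∈ Finset.range k, α ^ i * (1 / k))) := by
    refine (tendsto_finsetSum _ fun i hi => ?_).const_mul _
    exact ((tendsto_residue (Finset.mem_range.mp hi)).comp
      (tendsto_id.const_mul_atTop hγ0)).const_mul _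
  convert hlim using 2
  rw [← Finset.sum_mul, geom_sum_eq hα1.ne']
  have h1 : α ^ k - 1 ≠ 0 := by linarith
  have h2 : α - 1 = r / μ := by rw [hα]; field_simp; ring
  have h3 : (k : ℝ) ≠ 0 := by positivity
  rw [h2]
  field_simp
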